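/- Let M be a (2n+1)-dimensional Kenmotsu manifold with structure (φ, ξ, η, g), Levi-Civita connection ∇ and curvature tensor R. Then for all vector fields X, Y, W on M: (∇_W R)(X,Y)ξ = g(Y,φW)φX − g(X,φW)φY + φ(R(X,Y)φW). -/

import Mathlib

/-!
Both sides are expressed through `R(X,Y)W`.

On the left, `R(X,Y)ξ = η(X)Y − η(Y)X` (`R_xi`), and differentiating this gives
`(∇_W R)(X,Y)ξ = g(X,W)Y − g(Y,W)X − R(X,Y)W + D(η(W))ξ` (`nablaR_xi`), where
`D f = X(Yf) − Y(Xf) − [X,Y]f`. On the right, the Ricci identity for `φ` (`R_phi`) says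
`R(X,Y)φW = φR(X,Y)W + g(Y,W)φX − g(X,W)φY + g(X,φW)Y − g(Y,φW)X`; applying `φ` and using
`φ² = −1 + η ⊗ ξ` expresses `φR(X,Y)φW` through `R(X,Y)W` and `η(R(X,Y)W)ξ`.

On a manifold `D = 0`. The abstract structure does not force `[X,Y]` to act on functions as a
commutator, so `D` is carried along: metric compatibility gives
`D(η(W)) = η(R(X,Y)W) + g(W, R(X,Y)ξ)` (`defect_g`), and this makes the two sides agree
whatever `D` is.
-/

/-!
Abstract model of a (2n+1)-dimensional Kenmotsu manifold: `F` plays the role of the ring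
of smooth functions on `M` and `VF` the `F`-module of (smooth) vector fields on `M`.
The field `n` records the dimension `2n+1`.  All defining axioms of an almost contact
metric structure, of the Levi-Civita connection, and the Kenmotsu conditions are included.
-/
structure Kenmotsu (F VF : Type*) [CommRing F] [AddCommGroup VF] [Module F VF] where
  /-- half-dimension: `M` has dimension `2n+1` -/
  n : ℕ
  /-- action of a vector field on a function (directional derivative) -/
  act : VF → F → F
  /-- Lie bracket of vector fields -/
  bracket : VF → VF → VF
  /-- Levi-Civita connection `∇` -/
  nabla : VF → VF → VF
  /-- Riemannian metric -/
  g : VF → VF → F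
  /-- structure `(1,1)`-tensor `φ` -/
  phi : VF → VF
  /-- Reeb vector field `ξ` -/
  xi : VF
  /-- structure 1-form `η` -/
  eta : VF → F
  -- tensoriality / derivation axioms
  act_add : ∀ X Y f, act (X + Y) f = act X f + act Y f
  act_smul : ∀ (c : F) X f, act (c • X) f = c * act X f
  act_mul : ∀ X f h, act X (f * h) = act X f * h + f * act X h
  bracket_skew : ∀ X Y, bracket X Y = -bracket Y X
  g_addl : ∀ X Y Z, g (X + Y) Z = g X Z + g Y Z
  g_smull : ∀ (c : F) X Y, g (c • X) Y = c * g X Y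
  g_symm : ∀ X Y, g X Y = g Y X
  phi_add : ∀ X Y, phi (X + Y) = phi X + phi Y
  phi_smul : ∀ (c : F) X, phi (c • X) = c • phi X
  eta_add : ∀ X Y, eta (X + Y) = eta X + eta Y
  eta_smul : ∀ (c : F) X, eta (c • X) = c * eta X
  nabla_addl : ∀ X Y Z, nabla (X + Y) Z = nabla X Z + nabla Y Z
  nabla_smull : ∀ (c : F) X Y, nabla (c • X) Y = c • nabla X Y
  nabla_addr : ∀ X Y Z, nabla X (Y + Z) = nabla X Y + nabla X Z
  nabla_leibniz : ∀ X (f : F) Y, nabla X (f • Y) = act X f • Y + f • nabla X Y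
  -- Levi-Civita connection axioms
  torsion_free : ∀ X Y, nabla X Y - nabla Y X = bracket X Y
  metric_compat : ∀ X Y Z, act X (g Y Z) = g (nabla X Y) Z + g Y (nabla X Z)
  -- almost contact metric structure axioms
  eta_def : ∀ X, eta X = g X xi
  phi_sq : ∀ X, phi (phi X) = -X + eta X • xi
  eta_xi : eta xi = 1
  g_phi_phi : ∀ X Y, g (phi X) (phi Y) = g X Y - eta X * eta Y
  -- Kenmotsu conditions
  nabla_phi : ∀ X Y,
    nabla X (phi Y) - phi (nabla X Y) = -(g X (phi Y)) • xi - eta Y • phi X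
  nabla_xi : ∀ X, nabla X xi = X - eta X • xi

namespace Kenmotsu

variable {F VF : Type*} [CommRing F] [AddCommGroup VF] [Module F VF]

/-- Riemann curvature tensor `R(X,Y)Z = ∇_X∇_Y Z − ∇_Y∇_X Z − ∇_{[X,Y]}Z`. -/
def R (K : Kenmotsu F VF) (X Y Z : VF) : VF :=
  K.nabla X (K.nabla Y Z) - K.nabla Y (K.nabla X Z) - K.nabla (K.bracket X Y) Z

/-- Covariant derivative `(∇_W R)(X,Y)Z` of the curvature tensor. -/
def nablaR (K : Kenmotsu F VF) (W X Y Z : VF) : VF :=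
  K.nabla W (K.R X Y Z) - K.R (K.nabla W X) Y Z - K.R X (K.nabla W Y) Z
    - K.R X Y (K.nabla W Z)

/-- The derivation action `(R(U,V)·R)(X,Y)Z`. -/
def RdotR (K : Kenmotsu F VF) (U V X Y Z : VF) : VF :=
  K.R U V (K.R X Y Z) - K.R (K.R U V X) Y Z - K.R X (K.R U V Y) Z
    - K.R X Y (K.R U V Z)

/-- Lie derivative `(ℒ_ξ R)(X,Y)Z` of the `(1,3)`-curvature tensor along `ξ`. -/
def lieR (K : Kenmotsu F VF) (X Y Z : VF) : VF :=
  K.bracket K.xi (K.R X Y Z) - K.R (K.bracket K.xi X) Y Z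
    - K.R X (K.bracket K.xi Y) Z - K.R X Y (K.bracket K.xi Z)

/-- The auxiliary `(1,3)`-tensor `H₁(X,Y)Z = R(X,Y)Z − g(X,Z)Y + g(Y,Z)X`. -/
def H1 (K : Kenmotsu F VF) (X Y Z : VF) : VF :=
  K.R X Y Z - K.g X Z • Y + K.g Y Z • X

/-- `H(X,Y,Z,U) = g(H₁(X,Y)Z, U)`. -/
def H (K : Kenmotsu F VF) (X Y Z U : VF) : F := K.g (K.H1 X Y Z) U

/-- A vector field is horizontal if it is orthogonal to `ξ`, i.e. `η(X) = 0`. -/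
def Horizontal (K : Kenmotsu F VF) (X : VF) : Prop := K.eta X = 0

/-- `M` is locally `φ`-semisymmetric if `φ²((R(U,V)·R)(X,Y)Z) = 0` for all horizontal
vector fields `X, Y, Z, U, V`. -/
def LocallyPhiSemisymmetric (K : Kenmotsu F VF) : Prop :=
  ∀ X Y Z U V : VF, K.Horizontal X → K.Horizontal Y → K.Horizontal Z →
    K.Horizontal U → K.Horizontal V →
    K.phi (K.phi (K.RdotR U V X Y Z)) = 0

end Kenmotsu

namespace Kenmotsu

section Auxiliary

variable {F VF : Type*} [CommRing F] [AddCommGroup VF] [Module F VF] (K : Kenmotsu F VF)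

lemma nabla_subl (X Y Z : VF) : K.nabla (X - Y) Z = K.nabla X Z - K.nabla Y Z := by
  have h := K.nabla_addl (X - Y) Y Z
  rw [sub_add_cancel] at h
  rw [h, add_sub_cancel_right]

lemma nabla_subr (X Y Z : VF) : K.nabla X (Y - Z) = K.nabla X Y - K.nabla X Z := by
  have h := K.nabla_addr X (Y - Z) Z
  rw [sub_add_cancel] at h
  rw [h, add_sub_cancel_right]

lemma phi_sub (X Y : VF) : K.phi (X - Y) = K.phi X - K.phi Y := by
  have h := K.phi_add (X - Y) Y
  rw [sub_add_cancel] at h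
  rw [h, add_sub_cancel_right]

lemma eta_sub (X Y : VF) : K.eta (X - Y) = K.eta X - K.eta Y := by
  have h := K.eta_add (X - Y) Y
  rw [sub_add_cancel] at h
  rw [h, add_sub_cancel_right]

lemma g_subl (X Y Z : VF) : K.g (X - Y) Z = K.g X Z - K.g Y Z := by
  have h := K.g_addl (X - Y) Y Z
  rw [sub_add_cancel] at h
  rw [h, add_sub_cancel_right]

lemma g_subr (X Y Z : VF) : K.g X (Y - Z) = K.g X Y - K.g X Z := by
  rw [K.g_symm, g_subl, K.g_symm Y, K.g_symm Z]

lemma g_smulr (c : F) (X Y : VF) : K.g X (c • Y) = c * K.g X Y := by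
  rw [K.g_symm, K.g_smull, K.g_symm Y]

/-- Additivity of a directional derivative in the function: apply the Leibniz rule to
`(f + h) • ξ` and take the `η`-component. -/
lemma act_add_right (X : VF) (f h : F) : K.act X (f + h) = K.act X f + K.act X h := by
  have e := K.nabla_leibniz X (f + h) K.xi
  rw [add_smul, K.nabla_addr, K.nabla_leibniz, K.nabla_leibniz] at e
  have heta := congrArg K.eta e
  simp only [K.eta_add, K.eta_smul, K.eta_xi] at heta
  linear_combination -heta

/-- The covariant derivative of `η` is `g − η ⊗ η`. -/
lemma act_eta (X Y : VF) :
    K.act X (K.eta Y) = K.eta (K.nabla X Y) + K.g X Y - K.eta X * K.eta Y := by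
  rw [K.eta_def Y, K.metric_compat, K.nabla_xi, g_subr, g_smulr, ← K.eta_def, ← K.eta_def,
    K.g_symm Y X]
  ring

lemma nabla_phi_eq (X Y : VF) :
    K.nabla X (K.phi Y) =
      K.phi (K.nabla X Y) - K.g X (K.phi Y) • K.xi - K.eta Y • K.phi X := by
  linear_combination (norm := module) K.nabla_phi X Y

/-- The failure `D f = X(Yf) − Y(Xf) − [X,Y]f` of the bracket to act on functions as the
commutator. It vanishes on an actual manifold. -/
def defect (X Y : VF) (f : F) : F :=
  K.act X (K.act Y f) - K.act Y (K.act X f) - K.act (K.bracket X Y) f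

lemma R_sub (X Y Z U : VF) : K.R X Y (Z - U) = K.R X Y Z - K.R X Y U := by
  simp only [R, nabla_subr]
  abel

lemma R_smul (X Y : VF) (f : F) (Z : VF) :
    K.R X Y (f • Z) = f • K.R X Y Z + K.defect X Y f • Z := by
  simp only [R, defect, K.nabla_leibniz, K.nabla_addr]
  module

lemma defect_g (X Y A B : VF) :
    K.defect X Y (K.g A B) = K.g (K.R X Y A) B + K.g A (K.R X Y B) := by
  simp only [R, defect, K.metric_compat, act_add_right, g_subl, g_subr]
  ring

lemma R_xi (X Y : VF) : K.R X Y K.xi = K.eta X • Y - K.eta Y • X := by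
  simp only [R, K.nabla_xi, nabla_subr, K.nabla_leibniz, act_eta, ← K.torsion_free, eta_sub,
    K.g_symm Y X]
  module

/-- The `D`-term arises because `R(X,Y)` is applied to
`∇_W ξ = W − η(W)ξ`. -/
lemma nablaR_xi (W X Y : VF) :
    K.nablaR W X Y K.xi =
      K.g X W • Y - K.g Y W • X - K.R X Y W + K.defect X Y (K.eta W) • K.xi := by
  simp only [nablaR, K.nabla_xi, R_sub, R_smul, R_xi, nabla_subr, K.nabla_leibniz, act_eta,
    K.g_symm W]
  module

/-- The Ricci identity for `φ`. -/
lemma R_phi (X Y W : VF) :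
    K.R X Y (K.phi W) =
      K.phi (K.R X Y W) + K.g Y W • K.phi X - K.g X W • K.phi Y
        + K.g X (K.phi W) • Y - K.g Y (K.phi W) • X := by
  simp only [R, nabla_phi_eq, nabla_subr, K.nabla_leibniz, K.nabla_xi, act_eta, K.metric_compat,
    ← K.torsion_free, nabla_subl, phi_sub, g_subl, g_subr, g_smulr, ← K.eta_def]
  module

end Auxiliary

end Kenmotsu

/-- In a Kenmotsu manifold,
`(∇_W R)(X,Y)ξ = g(Y,φW)φX − g(X,φW)φY + φ(R(X,Y)φW)`. -/
theorem kenmotsu_nablaR_xi {F VF : Type*} [CommRing F] [AddCommGroup VF] [Module F VF]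
    (K : Kenmotsu F VF) (X Y W : VF) :
    K.nablaR W X Y K.xi =
      K.g Y (K.phi W) • K.phi X - K.g X (K.phi W) • K.phi Y
        + K.phi (K.R X Y (K.phi W)) := by
  -- `D(η(W)) = η(R(X,Y)W) + η(X)g(W,Y) − η(Y)g(W,X)`
  have hD := K.defect_g X Y W K.xi
  rw [← K.eta_def, ← K.eta_def, K.R_xi, K.g_subr, K.g_smulr, K.g_smulr] at hD
  rw [K.nablaR_xi, hD, K.R_phi]
  simp only [K.phi_add, K.phi_sub, K.phi_smul, K.phi_sq, K.g_symm W]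
  module
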